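/- arXiv:2407.00636 — 2 statements merged into one kernel-verified Lean document; each statement's English description precedes it below -/
import Mathlib

section
/- Let X be a nonempty lattice, C a linearly ordered set, and f : X → C a join-superextremal map. Suppose that for every t ∈ C, the upper level set [f ≥ t] = {x ∈ X : f(x) ≥ t}, with the order induced from X, is chain-complete upwards and, whenever nonempty, has a minimal element. Then the set argmax f of maximizers of f is a nonempty quasisublattice of X. -/
/-- `f` is join-superextremal if for all `x, y`, either `f (x ⊓ y) ≥ f x ⊓ f y` or
`f (x ⊔ y) ≥ f x`. -/
def JoinSuperextremal {X C : Type*} [Lattice X] [LinearOrder C] (f : X → C) : Prop :=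
  ∀ x y : X, f x ⊓ f y ≤ f (x ⊓ y) ∨ f x ≤ f (x ⊔ y)

/-- A subset `A` of a poset is chain-complete upwards if every nonempty chain
contained in `A` has a least upper bound within `A` (in the induced order). -/
def ChainCompleteUpwardsOn {X : Type*} [PartialOrder X] (A : Set X) : Prop :=
  ∀ c : Set X, c ⊆ A → c.Nonempty → IsChain (· ≤ ·) c →
    ∃ m ∈ A, (∀ x ∈ c, x ≤ m) ∧ ∀ b ∈ A, (∀ x ∈ c, x ≤ b) → m ≤ b

/-- A subset `A` of a poset has a minimal element. -/
def HasMinimalOn {X : Type*} [PartialOrder X] (A : Set X) : Prop :=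
  ∃ m ∈ A, ∀ x ∈ A, x ≤ m → x = m

/-- A subset `A` of a lattice is a quasisublattice if for all `x, y ∈ A`, at least
one of `x ⊓ y`, `x ⊔ y` belongs to `A`. -/
def Quasisublattice {X : Type*} [Lattice X] (A : Set X) : Prop :=
  ∀ x ∈ A, ∀ y ∈ A, x ⊓ y ∈ A ∨ x ⊔ y ∈ A

/-!
Joining with a minimal element `b` of a level set `[f ≥ s]` preserves every level set
`[f ≥ t]`, `t ≥ s`: if the meet alternative of superextremality holds at `y, b`, minimality gives
`y ⊓ b = b`, so `y ⊔ b = y`. Therefore the chosen minimal elements of the levels `s ≤ t` have a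
least upper bound `g t` inside `[f ≥ t]`: a maximal one among the elements of `[f ≥ t]` below all
their upper bounds there must absorb each of them. This `g` is a monotone selection of the level
sets. Take a maximal monotone selection `g`. Replacing each `g t` by the least upper bound inside
`[f ≥ t]` of all values of `g` gives another monotone selection above `g`, so `g` dominates all of
its own values: it is constant, and its value lies in every nonempty level set.
-/

section ChainComplete

variable {X : Type*} [PartialOrder X] {A : Set X}

theorem HasMinimalOn.exists_minimal (hA : HasMinimalOn A) : ∃ m, Minimal (· ∈ A) m := by
  obtain ⟨m, hmA, hm⟩ := hA
  exact ⟨m, hmA, fun x hx hxm => (hm x hx hxm).ge⟩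

theorem chainCompleteUpwardsOn_iff_exists_isLeast :
    ChainCompleteUpwardsOn A ↔ ∀ c ⊆ A, c.Nonempty → IsChain (· ≤ ·) c →
      ∃ m, IsLeast (A ∩ upperBounds c) m := by
  refine forall₄_congr fun c _ _ _ => exists_congr fun m => ?_
  exact ⟨fun ⟨hmA, hcm, hm⟩ => ⟨⟨hmA, hcm⟩, fun b hb => hm b hb.1 hb.2⟩,
    fun ⟨⟨hmA, hcm⟩, hm⟩ => ⟨hmA, hcm, fun _ hbA hcb => hm ⟨hbA, hcb⟩⟩⟩

namespace ChainCompleteUpwardsOn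

theorem exists_isLeast (hA : ChainCompleteUpwardsOn A) {c : Set X} (hcA : c ⊆ A)
    (hne : c.Nonempty) (hc : IsChain (· ≤ ·) c) : ∃ m, IsLeast (A ∩ upperBounds c) m :=
  chainCompleteUpwardsOn_iff_exists_isLeast.mp hA c hcA hne hc

theorem exists_le_maximal (hA : ChainCompleteUpwardsOn A) {x : X} (hx : x ∈ A) :
    ∃ m, x ≤ m ∧ Maximal (· ∈ A) m := by
  refine zorn_le_nonempty₀ A (fun c hcA hc y hy => ?_) x hx
  obtain ⟨m, ⟨hmA, hcm⟩, -⟩ := hA.exists_isLeast hcA ⟨y, hy⟩ hc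
  exact ⟨m, hmA, hcm⟩

theorem inter_lowerBounds (hA : ChainCompleteUpwardsOn A) {D : Set X} (hD : D ⊆ A) :
    ChainCompleteUpwardsOn (A ∩ lowerBounds D) := by
  refine chainCompleteUpwardsOn_iff_exists_isLeast.mpr fun c hc hne hchain => ?_
  obtain ⟨m, ⟨hmA, hcm⟩, hm⟩ := hA.exists_isLeast (fun _ hx => (hc hx).1) hne hchain
  have hmD : m ∈ lowerBounds D := fun d hd => hm ⟨hD hd, fun x hx => (hc hx).2 hd⟩
  exact ⟨m, ⟨⟨hmA, hmD⟩, hcm⟩, fun b hb => hm ⟨hb.1.1, hb.2⟩⟩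

end ChainCompleteUpwardsOn

end ChainComplete

theorem ChainCompleteUpwardsOn.exists_isLeast_of_sup_mem {X : Type*} [SemilatticeSup X]
    {A B : Set X} (hA : ChainCompleteUpwardsOn A) (hsup : ∀ y ∈ A, ∀ b ∈ B, y ⊔ b ∈ A)
    (hAB : (A ∩ B).Nonempty) : ∃ w, IsLeast (A ∩ upperBounds B) w := by
  obtain ⟨b₀, hb₀A, hb₀B⟩ := hAB
  have hb₀ : b₀ ∈ A ∩ lowerBounds (A ∩ upperBounds B) := ⟨hb₀A, fun _ hu => hu.2 hb₀B⟩
  obtain ⟨w, -, hw⟩ := (hA.inter_lowerBounds Set.inter_subset_left).exists_le_maximal hb₀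
  obtain ⟨hwA, hwlb⟩ := hw.prop
  refine ⟨w, ⟨hwA, fun b hb => ?_⟩, hwlb⟩
  have hmem : w ⊔ b ∈ A ∩ lowerBounds (A ∩ upperBounds B) :=
    ⟨hsup w hwA b hb, fun _ hu => sup_le (hwlb hu) (hu.2 hb)⟩
  exact le_sup_right.trans (hw.le_of_ge hmem le_sup_left)

/-- The monotone selections of a set-valued map `A`: the monotone functions `g` with
`g i ∈ A i` for all `i`, as a subset of `ι → X` with the pointwise order. -/
def monotoneSelections {ι X : Type*} [Preorder ι] [Preorder X] (A : ι → Set X) : Set (ι → X) :=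
  {g | Monotone g ∧ ∀ i, g i ∈ A i}

section MonotoneSelections

variable {ι X : Type*}

theorem mem_monotoneSelections_of_isLeast [Preorder ι] [Preorder X] {A U : ι → Set X}
    (hA : Antitone A) (hU : Antitone U) {m : ι → X} (hm : ∀ i, IsLeast (A i ∩ U i) (m i)) :
    m ∈ monotoneSelections A :=
  ⟨fun i j hij => (hm j).mono (hm i) (Set.inter_subset_inter (hA hij) (hU hij)),
    fun i => (hm i).1.1⟩

theorem upperBounds_image_Ici_of_monotone [Preorder ι] [IsDirectedOrder ι] [Preorder X]
    {g : ι → X} (hg : Monotone g) (i : ι) :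
    upperBounds (g '' Set.Ici i) = upperBounds (Set.range g) := by
  refine Set.Subset.antisymm ?_ (upperBounds_mono_set (Set.image_subset_range g _))
  rintro u hu _ ⟨j, rfl⟩
  obtain ⟨k, hjk, hik⟩ := exists_ge_ge j i
  exact (hg hjk).trans (hu ⟨k, hik, rfl⟩)

theorem chainCompleteUpwardsOn_monotoneSelections [Preorder ι] [PartialOrder X] {A : ι → Set X}
    (hA : Antitone A) (hcc : ∀ i, ChainCompleteUpwardsOn (A i)) :
    ChainCompleteUpwardsOn (monotoneSelections A) := by
  refine chainCompleteUpwardsOn_iff_exists_isLeast.mpr fun c hcA hne hc => ?_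
  have hsup (i : ι) : ∃ m, IsLeast (A i ∩ upperBounds (Function.eval i '' c)) m :=
    (hcc i).exists_isLeast (Set.image_subset_iff.mpr fun g hg => (hcA hg).2 i) (hne.image _)
      ((Function.monotone_eval i).isChain_image hc)
  choose m hm using hsup
  have hU : Antitone fun i => upperBounds (Function.eval i '' c) := by
    rintro i j hij u hu _ ⟨g, hg, rfl⟩
    exact ((hcA hg).1 hij).trans (hu ⟨g, hg, rfl⟩)
  refine ⟨m, ⟨mem_monotoneSelections_of_isLeast hA hU hm,
    fun g hg i => (hm i).1.2 ⟨g, hg, rfl⟩⟩, fun u hu i => (hm i).2 ⟨hu.1.2 i, ?_⟩⟩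
  rintro _ ⟨g, hg, rfl⟩
  exact hu.2 hg i

theorem apply_eq_of_maximal_mem_monotoneSelections [LinearOrder ι] [PartialOrder X]
    {A : ι → Set X} (hA : Antitone A) (hcc : ∀ i, ChainCompleteUpwardsOn (A i)) {g : ι → X}
    (hg : Maximal (· ∈ monotoneSelections A) g) (i j : ι) : g i = g j := by
  obtain ⟨hmono, hgA⟩ := hg.prop
  have hsup (i : ι) : ∃ m, IsLeast (A i ∩ upperBounds (Set.range g)) m := by
    rw [← upperBounds_image_Ici_of_monotone hmono i]
    exact (hcc i).exists_isLeast (Set.image_subset_iff.mpr fun k hk => hA hk (hgA k))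
      (Set.nonempty_Ici.image g) (hmono.isChain_range.mono (Set.image_subset_range g _))
  choose m hm using hsup
  have hmg : m ≤ g := hg.le_of_ge (mem_monotoneSelections_of_isLeast hA antitone_const hm)
    fun k => (hm k).1.2 ⟨k, rfl⟩
  have hle (k l : ι) : g k ≤ g l := ((hm l).1.2 ⟨k, rfl⟩).trans (hmg l)
  exact (hle i j).antisymm (hle j i)

theorem iInter_nonempty_of_monotoneSelections_nonempty [LinearOrder ι] [Nonempty ι]
    [PartialOrder X] {A : ι → Set X} (hA : Antitone A) (hcc : ∀ i, ChainCompleteUpwardsOn (A i))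
    (hne : (monotoneSelections A).Nonempty) : (⋂ i, A i).Nonempty := by
  obtain ⟨w, hw⟩ := hne
  obtain ⟨g, -, hg⟩ := (chainCompleteUpwardsOn_monotoneSelections hA hcc).exists_le_maximal hw
  obtain ⟨i⟩ := ‹Nonempty ι›
  refine ⟨g i, Set.mem_iInter.mpr fun j => ?_⟩
  rw [apply_eq_of_maximal_mem_monotoneSelections hA hcc hg i j]
  exact hg.prop.2 j

theorem monotoneSelections_nonempty_of_sup_mem [Preorder ι] [SemilatticeSup X] {A : ι → Set X}
    (hA : Antitone A) (hcc : ∀ i, ChainCompleteUpwardsOn (A i)) {b : ι → X}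
    (hb : ∀ i, b i ∈ A i) (hsup : ∀ ⦃i j⦄, i ≤ j → ∀ y ∈ A j, y ⊔ b i ∈ A j) :
    (monotoneSelections A).Nonempty := by
  have hlub (j : ι) : ∃ w, IsLeast (A j ∩ upperBounds (b '' Set.Iic j)) w := by
    refine (hcc j).exists_isLeast_of_sup_mem ?_ ⟨b j, hb j, j, le_rfl, rfl⟩
    rintro y hy _ ⟨i, hij, rfl⟩
    exact hsup hij y hy
  choose w hw using hlub
  have hU : Antitone fun j => upperBounds (b '' Set.Iic j) := fun i j hij =>
    upperBounds_mono_set (Set.image_mono (Set.Iic_subset_Iic.mpr hij))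
  exact ⟨w, mem_monotoneSelections_of_isLeast hA hU hw⟩

end MonotoneSelections

namespace JoinSuperextremal

variable {X C : Type*} [Lattice X] [LinearOrder C] {f : X → C}

theorem le_sup_of_minimal (hf : JoinSuperextremal f) {t : C} {b y : X}
    (hb : Minimal (· ∈ {x | t ≤ f x}) b) (hy : t ≤ f y) : f y ≤ f (y ⊔ b) := by
  rcases hf y b with hinf | hsup
  · have hby : b ≤ y ⊓ b := hb.le_of_le ((le_inf hy hb.prop).trans hinf) inf_le_right
    rw [sup_eq_left.mpr (le_inf_iff.mp hby).1]
  · exact hsup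

theorem argmax_nonempty [Nonempty X] (hf : JoinSuperextremal f)
    (hcc : ∀ a : X, ChainCompleteUpwardsOn {x | f a ≤ f x})
    (hmin : ∀ a : X, HasMinimalOn {x | f a ≤ f x}) : {x | ∀ y, f y ≤ f x}.Nonempty := by
  let level : Set.range f → Set X := fun t => {x | t ≤ f x}
  have hanti : Antitone level := fun _ _ hst _ hx => le_trans hst hx
  have hlevel : ∀ t, ChainCompleteUpwardsOn (level t) := Set.forall_subtype_range_iff.mpr hcc
  have hlevel_min : ∀ t, ∃ b, Minimal (· ∈ level t) b :=
    Set.forall_subtype_range_iff.mpr fun a => (hmin a).exists_minimal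
  choose b hb using hlevel_min
  have hsup ⦃s t : Set.range f⦄ (hst : s ≤ t) (y : X) (hy : y ∈ level t) : y ⊔ b s ∈ level t :=
    le_trans hy (hf.le_sup_of_minimal (hb s) (hanti hst hy))
  obtain ⟨x, hx⟩ := iInter_nonempty_of_monotoneSelections_nonempty hanti hlevel
    (monotoneSelections_nonempty_of_sup_mem hanti hlevel (fun t => (hb t).prop) hsup)
  exact ⟨x, fun y => Set.mem_iInter.mp hx ⟨f y, y, rfl⟩⟩

theorem quasisublattice_argmax (hf : JoinSuperextremal f) :
    Quasisublattice {x | ∀ y, f y ≤ f x} := fun x hx y hy =>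
  (hf x y).imp (fun hinf z => (le_inf (hx z) (hy z)).trans hinf)
    (fun hsup z => (hx z).trans hsup)

end JoinSuperextremal

/-- Corollary 3.5 (3): if `f : X → C` is join-superextremal from a nonempty lattice to a
chain and every upper level set `[f ≥ t]` is chain-complete upwards and (when nonempty)
admits a minimal element, then `argmax f` is a nonempty quasisublattice of `X`. -/
theorem argmax_nonempty_quasisublattice_of_joinSuperextremal {X C : Type*} [Lattice X]
    [Nonempty X] [LinearOrder C] (f : X → C) (hf : JoinSuperextremal f)
    (hcc : ∀ t : C, ChainCompleteUpwardsOn {x : X | t ≤ f x})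
    (hmin : ∀ t : C, ({x : X | t ≤ f x}).Nonempty → HasMinimalOn {x : X | t ≤ f x}) :
    ({x : X | ∀ y : X, f y ≤ f x}).Nonempty ∧ Quasisublattice {x : X | ∀ y : X, f y ≤ f x} := by
  exact ⟨hf.argmax_nonempty (fun a => hcc (f a)) (fun a => hmin (f a) ⟨a, le_rfl⟩),
    hf.quasisublattice_argmax⟩
end

section
/- Consider a normal form game with nonempty player set N, strategy sets S_i and payoff functions u_i : ∏_j S_j → C_i with each C_i a linearly ordered set. Assume that for every i ∈ N: (1) S_i is a complete lattice; (2) for every s_{-i} ∈ S_{-i}, the section u_i(·, s_{-i}) : S_i → C_i is weakly quasisupermodular; (3) u_i satisfies the single crossing property relative to (S_i, S_{-i}); (4) for every s_{-i} ∈ S_{-i} and every t ∈ C_i, the set [u_i(·, s_{-i}) ≥ t] = {a ∈ S_i : u_i(a, s_{-i}) ≥ t}, with the order induced from S_i, is chain-complete downwards and chain-bounded above. Then the set E of Nash equilibria is nonempty and is a complete lattice in the order induced from the product order on ∏_j S_j: every subset A ⊆ E has a least upper bound in E and a greatest lower bound in E. -/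
open Classical in
/-- Combine a strategy `a` of player `i` with a joint strategy `t` of the other players
into a joint strategy of all players. -/
noncomputable def combine {N : Type*} {S : N → Type*} (i : N) (a : S i)
    (t : ∀ j : {j : N // j ≠ i}, S j.1) : ∀ j, S j :=
  fun j => if h : j = i then cast (congrArg S h.symm) a else t ⟨j, h⟩

/-- A joint strategy `x` is a Nash equilibrium: no player `i` can improve the payoff
`u i x` by a unilateral deviation `y`. -/
def IsNashEquilibrium {N : Type*} {S : N → Type*} {C : N → Type*} [∀ i, LinearOrder (C i)]
    (u : ∀ i, (∀ j, S j) → C i) (x : ∀ j, S j) : Prop :=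
  ∀ i, ∀ y : S i, u i (combine i y (fun j => x j.1)) ≤ u i x

/-- `f` is weakly quasisupermodular if `f (x ⊓ y) < f x → f x ⊓ f y < f (x ⊔ y)` and
`f (x ⊔ y) < f x → f x ⊓ f y < f (x ⊓ y)` for all `x, y`. -/
def WeaklyQuasisupermodular {X C : Type*} [Lattice X] [LinearOrder C] (f : X → C) : Prop :=
  ∀ x y : X, (f (x ⊓ y) < f x → f x ⊓ f y < f (x ⊔ y)) ∧
    (f (x ⊔ y) < f x → f x ⊓ f y < f (x ⊓ y))

/-- A subset `A` of a poset is chain-complete downwards if every nonempty chain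
contained in `A` has a greatest lower bound within `A` (in the induced order). -/
def ChainCompleteDownwardsOn {X : Type*} [PartialOrder X] (A : Set X) : Prop :=
  ∀ c : Set X, c ⊆ A → c.Nonempty → IsChain (· ≤ ·) c →
    ∃ m ∈ A, (∀ x ∈ c, m ≤ x) ∧ ∀ b ∈ A, (∀ x ∈ c, b ≤ x) → b ≤ m

/-- A subset `A` of a poset is chain-bounded above if every nonempty chain contained
in `A` has an upper bound belonging to `A`. -/
def ChainBoundedAboveOn {X : Type*} [PartialOrder X] (A : Set X) : Prop :=
  ∀ c : Set X, c ⊆ A → c.Nonempty → IsChain (· ≤ ·) c → ∃ u ∈ A, ∀ x ∈ c, x ≤ u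

/-!
Nash equilibria are the fixed points of the joint best-reply correspondence, so the theorem has
two halves.

*Best replies exist.* Payoffs carry no topology, so compactness is replaced by order: among the
points `p` lying above every minimal upper bound (within a level set) of every set that `p` bounds,
there is a least one. Each level set has a maximal element `y` below `p`; weak quasisupermodularity
gives `y` the same property, so `y = p` by minimality, and `p` lies in every level set.

*Fixed points form a complete lattice.* Weak quasisupermodularity and single crossing make best
replies ascending in Veinott's strong set order. Each set of best replies is then a sublattice in
which all suprema exist, and a Knaster–Tarski argument applies: the infimum of all bounds `x` of `A`
with some value `m ≤ x` bounding `A` is the least fixed point bounding `A`.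
-/

section ChainConditions

variable {X : Type*} [PartialOrder X] {V K : Set X}

theorem ChainCompleteDownwardsOn.exists_le_minimal (hV : ChainCompleteDownwardsOn V) {w : X}
    (hw : w ∈ V) : ∃ m ≤ w, Minimal (· ∈ V) m :=
  zorn_le_nonempty₀ (α := Xᵒᵈ) V (fun c hcV hc y hy =>
    let ⟨m, hmV, hmc, _⟩ := hV c hcV ⟨y, hy⟩ hc.symm
    ⟨m, hmV, hmc⟩) w hw

theorem ChainBoundedAboveOn.exists_ge_maximal (hV : ChainBoundedAboveOn V) {w : X}
    (hw : w ∈ V) : ∃ m, w ≤ m ∧ Maximal (· ∈ V) m :=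
  zorn_le_nonempty₀ V (fun c hcV hc y hy => hV c hcV ⟨y, hy⟩ hc) w hw

theorem ChainCompleteDownwardsOn.inter_upperBounds (hV : ChainCompleteDownwardsOn V)
    (hK : K ⊆ V) : ChainCompleteDownwardsOn (V ∩ upperBounds K) := by
  intro c hcV hne hc
  obtain ⟨m, hmV, hmc, hm⟩ := hV c (fun x hx => (hcV hx).1) hne hc
  exact ⟨m, ⟨hmV, fun k hk => hm k (hK hk) fun x hx => (hcV hx).2 hk⟩, hmc,
    fun b hb => hm b hb.1⟩

variable {ι : Type*} {Y : ι → Type*} [∀ i, PartialOrder (Y i)] {W : ∀ i, Set (Y i)}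

theorem ChainCompleteDownwardsOn.univ_pi (hW : ∀ i, ChainCompleteDownwardsOn (W i)) :
    ChainCompleteDownwardsOn (Set.univ.pi W) := by
  intro c hcW hne hc
  have hproj : ∀ i, ∃ m ∈ W i, (∀ a ∈ Function.eval i '' c, m ≤ a) ∧
      ∀ b ∈ W i, (∀ a ∈ Function.eval i '' c, b ≤ a) → b ≤ m := fun i =>
    hW i _ (Set.image_subset_iff.2 fun x hx => hcW hx i trivial) (hne.image _)
      ((Function.monotone_eval i).isChain_image hc)
  choose m hmW hmc hm using hproj
  exact ⟨m, fun i _ => hmW i, fun x hx i => hmc i _ ⟨x, hx, rfl⟩,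
    fun b hb hbc i => hm i (b i) (hb i trivial) (Set.forall_mem_image.2 fun x hx => hbc x hx i)⟩

theorem ChainBoundedAboveOn.univ_pi (hW : ∀ i, ChainBoundedAboveOn (W i)) :
    ChainBoundedAboveOn (Set.univ.pi W) := by
  intro c hcW hne hc
  have hproj : ∀ i, ∃ m ∈ W i, ∀ a ∈ Function.eval i '' c, a ≤ m := fun i =>
    hW i _ (Set.image_subset_iff.2 fun x hx => hcW hx i trivial) (hne.image _)
      ((Function.monotone_eval i).isChain_image hc)
  choose m hmW hmc using hproj
  exact ⟨m, fun i _ => hmW i, fun x hx i => hmc i _ ⟨x, hx, rfl⟩⟩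

end ChainConditions

section Intersection

variable {X : Type*} {ι : Sort*} {L : ι → Set X} {p y : X} {i : ι}

/-- `p` lies above every minimal upper bound, within a member of the family `L`, of every subset
of that member which `p` bounds above. The least such point lies in every member of `L`; this is
how a common point of the family is found. -/
def AbsorbsMinimalBounds [Preorder X] (L : ι → Set X) (p : X) : Prop :=
  ∀ i, ∀ K ⊆ L i, ∀ w, Minimal (· ∈ L i ∩ upperBounds K) w → p ∈ upperBounds K → w ≤ p

theorem AbsorbsMinimalBounds.sInf [CompleteLattice X] {Q : Set X}
    (hQ : ∀ q ∈ Q, AbsorbsMinimalBounds L q) : AbsorbsMinimalBounds L (sInf Q) :=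
  fun i K hK w hw hQK => le_sInf fun q hq =>
    hQ q hq i K hK w hw fun _ hk => (hQK hk).trans (sInf_le hq)

theorem AbsorbsMinimalBounds.nonempty_inter_Iic [PartialOrder X] (hp : AbsorbsMinimalBounds L p)
    (hcc : ChainCompleteDownwardsOn (L i)) (hne : (L i).Nonempty) :
    (L i ∩ Set.Iic p).Nonempty := by
  obtain ⟨x, hx⟩ := hne
  obtain ⟨m, -, hm⟩ := hcc.exists_le_minimal hx
  exact ⟨m, hm.prop, hp i ∅ (Set.empty_subset _) m (by simpa using hm) (by simp)⟩

theorem AbsorbsMinimalBounds.chainBoundedAboveOn_inter_Iic [PartialOrder X]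
    (hp : AbsorbsMinimalBounds L p) (hcc : ChainCompleteDownwardsOn (L i))
    (hba : ChainBoundedAboveOn (L i)) : ChainBoundedAboveOn (L i ∩ Set.Iic p) := by
  intro c hcL hne hc
  have hcLi : c ⊆ L i := fun x hx => (hcL hx).1
  obtain ⟨b, hbL, hbc⟩ := hba c hcLi hne hc
  obtain ⟨w, -, hw⟩ := (hcc.inter_upperBounds hcLi).exists_le_minimal ⟨hbL, hbc⟩
  exact ⟨w, ⟨hw.prop.1, hp i c hcLi w hw fun x hx => (hcL hx).2⟩, hw.prop.2⟩

theorem AbsorbsMinimalBounds.of_maximal_inter_Iic [Lattice X]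
    (hL : ∀ i j, ∀ w ∈ L i, ∀ y ∈ L j, w ⊓ y ∈ L i ∨ w ⊔ y ∈ L j)
    (hp : AbsorbsMinimalBounds L p) (hy : Maximal (· ∈ L i ∩ Set.Iic p) y) :
    AbsorbsMinimalBounds L y := by
  intro j K hK w hw hyK
  have hwp : w ≤ p := hp j K hK w hw fun k hk => (hyK hk).trans hy.prop.2
  rcases hL j i w hw.prop.1 y hy.prop.1 with hinf | hsup
  · have hinfK : w ⊓ y ∈ upperBounds K := fun k hk => le_inf (hw.prop.2 hk) (hyK hk)
    exact (hw.le_of_le ⟨hinf, hinfK⟩ inf_le_left).trans inf_le_right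
  · exact le_sup_left.trans (hy.le_of_ge ⟨hsup, sup_le hwp hy.prop.2⟩ le_sup_right)

theorem iInter_nonempty_of_inf_mem_or_sup_mem [CompleteLattice X]
    (hL : ∀ i j, ∀ w ∈ L i, ∀ y ∈ L j, w ⊓ y ∈ L i ∨ w ⊔ y ∈ L j)
    (hne : ∀ i, (L i).Nonempty) (hcc : ∀ i, ChainCompleteDownwardsOn (L i))
    (hba : ∀ i, ChainBoundedAboveOn (L i)) : (⋂ i, L i).Nonempty := by
  have hp : AbsorbsMinimalBounds L (sInf {q | AbsorbsMinimalBounds L q}) := .sInf fun _ hq => hq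
  refine ⟨sInf {q | AbsorbsMinimalBounds L q}, Set.mem_iInter.2 fun i => ?_⟩
  obtain ⟨x, hx⟩ := hp.nonempty_inter_Iic (hcc i) (hne i)
  obtain ⟨y, -, hy⟩ := (hp.chainBoundedAboveOn_inter_Iic (hcc i) (hba i)).exists_ge_maximal hx
  rw [(sInf_le (hp.of_maximal_inter_Iic hL hy)).antisymm hy.prop.2]
  exact hy.prop.1

end Intersection

section Maximizers

variable {X C D : Type*}

/-- The set of global maximizers of `f`. -/
def maximizers [LE C] (f : X → C) : Set X :=
  {a | ∀ b, f b ≤ f a}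

theorem maximizers_eq_setOf_le [Preorder C] {f : X → C} {a : X} (ha : a ∈ maximizers f) :
    maximizers f = {b | f a ≤ f b} :=
  Set.ext fun _ => ⟨fun hb => hb a, fun hab z => (ha z).trans hab⟩

theorem chainCompleteDownwardsOn_maximizers [PartialOrder X] [Preorder C] {f : X → C}
    (hcc : ∀ c, ChainCompleteDownwardsOn {a | c ≤ f a}) :
    ChainCompleteDownwardsOn (maximizers f) := by
  rintro c hcf ⟨a, hac⟩ hc
  have hlevel : maximizers f = {b | f a ≤ f b} := maximizers_eq_setOf_le (hcf hac)
  rw [hlevel] at hcf ⊢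
  exact hcc (f a) c hcf ⟨a, hac⟩ hc

theorem chainBoundedAboveOn_maximizers [PartialOrder X] [Preorder C] {f : X → C}
    (hba : ∀ c, ChainBoundedAboveOn {a | c ≤ f a}) : ChainBoundedAboveOn (maximizers f) := by
  rintro c hcf ⟨a, hac⟩ hc
  have hlevel : maximizers f = {b | f a ≤ f b} := maximizers_eq_setOf_le (hcf hac)
  rw [hlevel] at hcf ⊢
  exact hba (f a) c hcf ⟨a, hac⟩ hc

theorem WeaklyQuasisupermodular.le_inf_or_le_sup [Lattice X] [LinearOrder C] {f : X → C}
    (hf : WeaklyQuasisupermodular f) {c d : C} {x y : X} (hx : c ≤ f x) (hy : d ≤ f y) :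
    c ≤ f (x ⊓ y) ∨ d ≤ f (x ⊔ y) := by
  by_contra! ⟨hinf, hsup⟩
  have hlt_sup : f x ⊓ f y < f (x ⊔ y) := (hf x y).1 (hinf.trans_le hx)
  have hlt_inf : f y ⊓ f x < f (y ⊓ x) := (hf y x).2 (by rw [sup_comm]; exact hsup.trans_le hy)
  rw [inf_comm (f y), inf_comm y] at hlt_inf
  rcases min_choice (f x) (f y) with h | h
  · exact (hinf.trans_le hx).not_gt (h ▸ hlt_inf)
  · exact (hsup.trans_le hy).not_gt (h ▸ hlt_sup)

theorem WeaklyQuasisupermodular.maximizers_nonempty [CompleteLattice X] [LinearOrder C]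
    {f : X → C} (hf : WeaklyQuasisupermodular f)
    (hcc : ∀ c, ChainCompleteDownwardsOn {a | c ≤ f a})
    (hba : ∀ c, ChainBoundedAboveOn {a | c ≤ f a}) : (maximizers f).Nonempty := by
  have hinter : (⋂ x, {a | f x ≤ f a}).Nonempty :=
    iInter_nonempty_of_inf_mem_or_sup_mem (fun _ _ _ hw _ hy => hf.le_inf_or_le_sup hw hy)
      (fun x => ⟨x, le_refl (f x)⟩) (fun x => hcc (f x)) (fun x => hba (f x))
  obtain ⟨p, hp⟩ := hinter
  have hp_level : ∀ x, p ∈ {a | f x ≤ f a} := Set.mem_iInter.1 hp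
  exact ⟨p, hp_level⟩

/-- `g` dominates `f` in the single crossing order of Milgrom and Shannon: every (strict)
preference of `f` for the larger of two comparable points is shared by `g`. -/
def SingleCrossingLE [LE X] [Preorder C] [Preorder D] (f : X → C) (g : X → D) : Prop :=
  ∀ ⦃a a'⦄, a ≤ a' → (f a ≤ f a' → g a ≤ g a') ∧ (f a < f a' → g a < g a')

theorem singleCrossingLE_of_le {T : Type*} [PartialOrder X] [PartialOrder T] [Preorder C]
    {v : X → T → C}
    (hv : ∀ a a', a < a' → ∀ t t', t < t' →
      (v a t ≤ v a' t → v a t' ≤ v a' t') ∧ (v a t < v a' t → v a t' < v a' t'))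
    {t t' : T} (ht : t ≤ t') : SingleCrossingLE (v · t) (v · t') := by
  intro a a' ha
  rcases ha.eq_or_lt with rfl | ha
  · exact ⟨fun _ => le_rfl, fun h => (lt_irrefl _ h).elim⟩
  rcases ht.eq_or_lt with rfl | ht
  · exact ⟨id, id⟩
  · exact hv a a' ha t t' ht

variable [Lattice X] {f : X → C} {g : X → D} {a b : X}

theorem WeaklyQuasisupermodular.inf_mem_maximizers [LinearOrder C] [Preorder D]
    (hf : WeaklyQuasisupermodular f) (hfg : SingleCrossingLE f g)
    (ha : a ∈ maximizers f) (hb : b ∈ maximizers g) :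
    a ⊓ b ∈ maximizers f := by
  suffices f a ≤ f (a ⊓ b) from fun z => (ha z).trans this
  by_contra! hlt
  rcases inf_lt_iff.1 ((hf a b).1 hlt) with h | h
  · exact (ha (a ⊔ b)).not_gt h
  · exact (hb (a ⊔ b)).not_gt ((hfg le_sup_right).2 h)

theorem WeaklyQuasisupermodular.sup_mem_maximizers [Preorder C] [LinearOrder D]
    (hg : WeaklyQuasisupermodular g) (hfg : SingleCrossingLE f g)
    (ha : a ∈ maximizers f) (hb : b ∈ maximizers g) :
    a ⊔ b ∈ maximizers g := by
  suffices g b ≤ g (b ⊔ a) from fun z => (hb z).trans (sup_comm b a ▸ this)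
  by_contra! hlt
  rcases inf_lt_iff.1 ((hg b a).2 hlt) with h | h
  · exact (hb (b ⊓ a)).not_gt h
  · exact ((hfg inf_le_right).1 (ha (b ⊓ a))).not_gt h

end Maximizers

section FixedPoints

theorem exists_isLeast_inter_upperBounds_of_isSublattice {X : Type*} [Lattice X] {V K : Set X}
    (hV : IsSublattice V) (hne : V.Nonempty) (hcc : ChainCompleteDownwardsOn V)
    (hba : ChainBoundedAboveOn V) (hK : K ⊆ V) : ∃ m, IsLeast (V ∩ upperBounds K) m := by
  obtain ⟨x, hx⟩ := hne
  obtain ⟨g, -, hg⟩ := hba.exists_ge_maximal hx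
  have hgK : g ∈ upperBounds K := fun k hk =>
    le_sup_left.trans (hg.le_of_ge (hV.supClosed (hK hk) hg.prop) le_sup_right)
  obtain ⟨m, -, hm⟩ := (hcc.inter_upperBounds hK).exists_le_minimal ⟨hg.prop, hgK⟩
  refine ⟨m, hm.prop, fun z hz => ?_⟩
  have hmz : m ⊓ z ∈ V ∩ upperBounds K :=
    ⟨hV.infClosed hm.prop.1 hz.1, fun k hk => le_inf (hm.prop.2 hk) (hz.2 hk)⟩
  exact (hm.le_of_le hmz inf_le_left).trans inf_le_right

theorem exists_isGreatest_inter_lowerBounds {X : Type*} [Preorder X] {E A : Set X}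
    (hE : ∀ B ⊆ E, ∃ s, IsLeast (E ∩ upperBounds B) s) (hA : A ⊆ E) :
    ∃ m, IsGreatest (E ∩ lowerBounds A) m := by
  obtain ⟨m, ⟨hmE, hm_upper⟩, hm_least⟩ := hE (E ∩ lowerBounds A) Set.inter_subset_left
  exact ⟨m, ⟨hmE, fun a ha => hm_least ⟨hA ha, fun b hb => hb.2 ha⟩⟩, hm_upper⟩

/-- A correspondence is ascending if larger arguments have larger values in Veinott's strong set
order. -/
def IsAscending {X Y : Type*} [LE X] [Lattice Y] (R : X → Set Y) : Prop :=
  ∀ ⦃x y⦄, x ≤ y → ∀ a ∈ R x, ∀ b ∈ R y, a ⊓ b ∈ R x ∧ a ⊔ b ∈ R y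

namespace IsAscending

theorem isSublattice {X Y : Type*} [Preorder X] [Lattice Y] {R : X → Set Y} (hR : IsAscending R)
    (x : X) : IsSublattice (R x) :=
  ⟨fun a ha b hb => (hR le_rfl a ha b hb).2, fun a ha b hb => (hR le_rfl a ha b hb).1⟩

theorem univ_pi {X ι : Type*} {Y : ι → Type*} [LE X] [∀ i, Lattice (Y i)]
    {R : ∀ i, X → Set (Y i)} (hR : ∀ i, IsAscending (R i)) :
    IsAscending fun x => Set.univ.pi fun i => R i x :=
  fun _ _ hxy a ha b hb =>
    ⟨fun i _ => (hR i hxy (a i) (ha i trivial) (b i) (hb i trivial)).1,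
      fun i _ => (hR i hxy (a i) (ha i trivial) (b i) (hb i trivial)).2⟩

theorem exists_isLeast_inter_upperBounds {X : Type*} [Lattice X] {R : X → Set X} {A : Set X}
    {x : X} (hR : IsAscending R) (hne : (R x).Nonempty) (hcc : ChainCompleteDownwardsOn (R x))
    (hba : ChainBoundedAboveOn (R x)) (hA : ∀ a ∈ A, a ∈ R a) (hx : x ∈ upperBounds A) :
    ∃ m, IsLeast (R x ∩ upperBounds A) m := by
  have hsup {K : Set X} : K ⊆ R x → ∃ m, IsLeast (R x ∩ upperBounds K) m :=
    exists_isLeast_inter_upperBounds_of_isSublattice (hR.isSublattice x) hne hcc hba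
  obtain ⟨q, ⟨hqR, -⟩, hq⟩ := hsup (Set.empty_subset _)
  -- Joining with the least value `q` moves `A` into `R x` without changing its bounds there.
  obtain ⟨m, ⟨hmR, hmA⟩, hm⟩ := hsup (K := (· ⊔ q) '' A) <|
    Set.image_subset_iff.2 fun a ha => (hR (hx ha) a (hA a ha) q hqR).2
  refine ⟨m, ⟨hmR, fun a ha => le_sup_left.trans (hmA ⟨a, ha, rfl⟩)⟩, fun z hz => ?_⟩
  exact hm ⟨hz.1, Set.forall_mem_image.2 fun a ha => sup_le (hz.2 ha) (hq ⟨hz.1, by simp⟩)⟩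

theorem exists_isLeast_fixedPoints_inter_upperBounds {X : Type*} [CompleteLattice X]
    {R : X → Set X} {A : Set X} (hR : IsAscending R) (hne : ∀ x, (R x).Nonempty)
    (hcc : ∀ x, ChainCompleteDownwardsOn (R x)) (hba : ∀ x, ChainBoundedAboveOn (R x))
    (hA : ∀ a ∈ A, a ∈ R a) : ∃ s, IsLeast ({x | x ∈ R x} ∩ upperBounds A) s := by
  have hleast {x : X} (hx : x ∈ upperBounds A) : ∃ m, IsLeast (R x ∩ upperBounds A) m :=
    hR.exists_isLeast_inter_upperBounds (hne x) (hcc x) (hba x) hA hx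
  let P : Set X := {x ∈ upperBounds A | ∃ m ∈ R x ∩ upperBounds A, m ≤ x}
  have hPA : sInf P ∈ upperBounds A := fun a ha => le_sInf fun x hx => hx.1 ha
  obtain ⟨m, ⟨hmR, hmA⟩, hm⟩ := hleast hPA
  have inf_mem {x y a b : X} (hxy : x ≤ y) (ha : a ∈ R x ∩ upperBounds A)
      (hb : b ∈ R y ∩ upperBounds A) : a ⊓ b ∈ R x ∩ upperBounds A :=
    ⟨(hR hxy a ha.1 b hb.1).1, fun c hc => le_inf (ha.2 hc) (hb.2 hc)⟩
  have hm_le : m ≤ sInf P := le_sInf fun x hx => by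
    obtain ⟨b, hb, hbx⟩ := hx.2
    exact (hm (inf_mem (sInf_le hx) ⟨hmR, hmA⟩ hb)).trans (inf_le_right.trans hbx)
  have hmP : m ∈ P := by
    obtain ⟨b, hb, -⟩ := hleast hmA
    exact ⟨hmA, b ⊓ m, inf_mem hm_le hb ⟨hmR, hmA⟩, inf_le_right⟩
  have hm_eq : m = sInf P := hm_le.antisymm (sInf_le hmP)
  exact ⟨sInf P, ⟨hm_eq ▸ hmR, hPA⟩, fun b hb => sInf_le ⟨hb.2, b, hb, le_rfl⟩⟩

end IsAscending

end FixedPoints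

section Games

variable {N : Type*} {S : N → Type*} {C : N → Type*} [∀ i, LinearOrder (C i)]

/-- The best replies of player `i` to a joint strategy `x`, whose own component `x i` is
ignored. -/
def bestReplies (u : ∀ i, (∀ j, S j) → C i) (i : N) (x : ∀ j, S j) : Set (S i) :=
  maximizers fun a => u i (combine i a fun j => x j.1)

theorem combine_self (i : N) (x : ∀ j, S j) : combine i (x i) (fun j => x j.1) = x := by
  funext j
  by_cases h : j = i
  · subst h
    simp [combine]
  · simp [combine, h]

theorem isNashEquilibrium_iff_mem_bestReplies {u : ∀ i, (∀ j, S j) → C i} {x : ∀ j, S j} :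
    IsNashEquilibrium u x ↔ x ∈ Set.univ.pi fun i => bestReplies u i x := by
  simp [IsNashEquilibrium, bestReplies, maximizers, combine_self]

theorem isAscending_bestReplies [∀ i, Lattice (S i)] {u : ∀ i, (∀ j, S j) → C i} {i : N}
    (hwqs : ∀ t, WeaklyQuasisupermodular fun a : S i => u i (combine i a t))
    (hsc : ∀ a a' : S i, a < a' → ∀ t t', t < t' →
      (u i (combine i a t) ≤ u i (combine i a' t) →
        u i (combine i a t') ≤ u i (combine i a' t')) ∧
      (u i (combine i a t) < u i (combine i a' t) →
        u i (combine i a t') < u i (combine i a' t'))) :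
    IsAscending (bestReplies u i) := by
  intro x y hxy a ha b hb
  have hcross := singleCrossingLE_of_le (v := fun a t => u i (combine i a t)) hsc
    (t := fun j => x j.1) (t' := fun j => y j.1) fun j => hxy j.1
  exact ⟨(hwqs _).inf_mem_maximizers hcross ha hb, (hwqs _).sup_mem_maximizers hcross ha hb⟩

end Games

/-- Theorem 4.11: a normal form game in which every strategy set is a complete lattice,
every section of a payoff function is weakly quasisupermodular, every payoff function
satisfies the single crossing property, and every upper level set of a section is
chain-complete downwards and chain-bounded above, has a nonempty complete lattice of
Nash equilibria: every set of Nash equilibria has a least upper bound and a greatest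
lower bound among the Nash equilibria. -/
theorem nashEquilibria_nonempty_completeLattice {N : Type*} [Nonempty N] {S : N → Type*}
    [∀ i, CompleteLattice (S i)] {C : N → Type*} [∀ i, LinearOrder (C i)]
    (u : ∀ i, (∀ j, S j) → C i)
    (hwqs : ∀ i, ∀ t : ∀ j : {j : N // j ≠ i}, S j.1,
      WeaklyQuasisupermodular (fun a : S i => u i (combine i a t)))
    (hsc : ∀ i, ∀ a a' : S i, a < a' → ∀ t t' : (∀ j : {j : N // j ≠ i}, S j.1), t < t' →
      (u i (combine i a t) ≤ u i (combine i a' t) →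
        u i (combine i a t') ≤ u i (combine i a' t')) ∧
      (u i (combine i a t) < u i (combine i a' t) →
        u i (combine i a t') < u i (combine i a' t')))
    (hcc : ∀ i, ∀ t : ∀ j : {j : N // j ≠ i}, S j.1, ∀ c : C i,
      ChainCompleteDownwardsOn {a : S i | c ≤ u i (combine i a t)})
    (hba : ∀ i, ∀ t : ∀ j : {j : N // j ≠ i}, S j.1, ∀ c : C i,
      ChainBoundedAboveOn {a : S i | c ≤ u i (combine i a t)}) :
    (∃ x : ∀ j, S j, IsNashEquilibrium u x) ∧
    ∀ A : Set (∀ j, S j), (∀ x ∈ A, IsNashEquilibrium u x) →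
      (∃ s : ∀ j, S j, IsNashEquilibrium u s ∧ (∀ x ∈ A, x ≤ s) ∧
        ∀ b : ∀ j, S j, IsNashEquilibrium u b → (∀ x ∈ A, x ≤ b) → s ≤ b) ∧
      (∃ m : ∀ j, S j, IsNashEquilibrium u m ∧ (∀ x ∈ A, m ≤ x) ∧
        ∀ b : ∀ j, S j, IsNashEquilibrium u b → (∀ x ∈ A, b ≤ x) → b ≤ m) := by
  have hne : ∀ i x, (bestReplies u i x).Nonempty := fun i x =>
    (hwqs i _).maximizers_nonempty (hcc i _) (hba i _)
  have hasc : IsAscending fun x => Set.univ.pi fun i => bestReplies u i x :=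
    .univ_pi fun i => isAscending_bestReplies (hwqs i) (hsc i)
  have hsup : ∀ A ⊆ {x | IsNashEquilibrium u x},
      ∃ s, IsLeast ({x | IsNashEquilibrium u x} ∩ upperBounds A) s := by
    simp only [isNashEquilibrium_iff_mem_bestReplies]
    exact fun A hA => hasc.exists_isLeast_fixedPoints_inter_upperBounds
      (fun x => Set.univ_pi_nonempty_iff.2 (hne · x))
      (fun x => .univ_pi fun i => chainCompleteDownwardsOn_maximizers (hcc i _))
      (fun x => .univ_pi fun i => chainBoundedAboveOn_maximizers (hba i _)) hA
  refine ⟨(hsup ∅ (Set.empty_subset _)).imp fun s hs => hs.1.1, fun A hA => ⟨?_, ?_⟩⟩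
  · obtain ⟨s, ⟨hs, hsA⟩, hs_least⟩ := hsup A hA
    exact ⟨s, hs, hsA, fun b hb hbA => hs_least ⟨hb, hbA⟩⟩
  · obtain ⟨m, ⟨hm, hmA⟩, hm_greatest⟩ := exists_isGreatest_inter_lowerBounds hsup hA
    exact ⟨m, hm, hmA, fun b hb hbA => hm_greatest ⟨hb, hbA⟩⟩
end
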